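/- arXiv:2405.06327 — 3 statements merged into one kernel-verified Lean document; each statement's English description precedes it below -/
import Mathlib

section
/- The backward error η of the approximate eigenpairs (λ̂_i, v̂_i), i = 1,…,p, satisfies η = ‖R ((G ⊙^T V^T)†)^T‖_F, where (G ⊙^T V^T)† is the Moore–Penrose pseudoinverse of G ⊙^T V^T; that is, the minimum in the definition of η is attained and equals ‖R ((G ⊙^T V^T)†)^T‖_F. -/
open Matrix Kronecker BigOperators

noncomputable section

/-- Frobenius norm of a complex matrix. -/
def fnorm {ι κ : Type*} [Fintype ι] [Fintype κ] (A : Matrix ι κ ℂ) : ℝ :=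
  Real.sqrt (∑ i, ∑ j, ‖A i j‖ ^ 2)

/-- The four Moore–Penrose conditions. -/
def IsMoorePenrose {ι κ : Type*} [Fintype ι] [Fintype κ]
    (A : Matrix ι κ ℂ) (B : Matrix κ ι ℂ) : Prop :=
  A * B * A = A ∧ B * A * B = B ∧ (A * B)ᴴ = A * B ∧ (B * A)ᴴ = B * A

open scoped Classical in
/-- The Moore–Penrose pseudoinverse (defined by choice; it always exists and is unique). -/
noncomputable def pinv {ι κ : Type*} [Fintype ι] [Fintype κ] (A : Matrix ι κ ℂ) :
    Matrix κ ι ℂ :=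
  if h : ∃ B, IsMoorePenrose A B then h.choose else 0

/-- The transposed Khatri–Rao product `G ⊙^T W`. -/
def krt {p k n : ℕ} (G : Matrix (Fin p) (Fin k) ℂ) (W : Matrix (Fin p) (Fin n) ℂ) :
    Matrix (Fin p) (Fin k × Fin n) ℂ :=
  Matrix.of fun i jl => G i jl.1 * W i jl.2

/-!
Write `[F] = [F₁, …, Fₖ]`, `K = G ⊙ᵀ Vᵀ`, `A = Kᵀ` and `B = (K†)ᵀ`, which is a pseudoinverse of `A`.
Column `i` of `[E] A` is `∑ⱼ Gᵢⱼ Eⱼ vᵢ`, so `R = [F] A` and the admissible perturbations are the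
solutions `X` of `([F] + X) A = 0`. The matrix `A B` is an orthogonal projection with `A B A = A`;
thus `-[F] A B` is a solution, and every solution satisfies `X A B = -[F] A B`, which gives
`‖X‖ ≥ ‖X A B‖ = ‖[F] A B‖`.
-/

section FrobeniusNorm

variable {ι κ : Type*} [Fintype ι] [Fintype κ]

lemma fnorm_nonneg (A : Matrix ι κ ℂ) : 0 ≤ fnorm A :=
  Real.sqrt_nonneg _

lemma fnorm_neg (A : Matrix ι κ ℂ) : fnorm (-A) = fnorm A := by
  simp [fnorm]

lemma trace_mul_conjTranspose_self (A : Matrix ι κ ℂ) :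
    trace (A * Aᴴ) = ((fnorm A ^ 2 : ℝ) : ℂ) := by
  rw [fnorm, Real.sq_sqrt (by positivity)]
  simp [trace, mul_apply, Complex.mul_conj']

lemma fnorm_mul_sq_add_fnorm_mul_one_sub_sq [DecidableEq κ] {P : Matrix κ κ ℂ}
    (hP : IsStarProjection P) (A : Matrix ι κ ℂ) :
    fnorm (A * P) ^ 2 + fnorm (A * (1 - P)) ^ 2 = fnorm A ^ 2 := by
  have mul_conjTranspose {Q : Matrix κ κ ℂ} (hQ : IsStarProjection Q) :
      A * Q * (A * Q)ᴴ = A * Q * Aᴴ := by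
    rw [conjTranspose_mul, ← star_eq_conjTranspose Q, hQ.isSelfAdjoint.star_eq, Matrix.mul_assoc A,
      ← Matrix.mul_assoc Q, hQ.isIdempotentElem.eq, Matrix.mul_assoc]
  apply Complex.ofReal_injective
  rw [Complex.ofReal_add, ← trace_mul_conjTranspose_self, ← trace_mul_conjTranspose_self,
    ← trace_mul_conjTranspose_self, mul_conjTranspose hP, mul_conjTranspose hP.one_sub, ← trace_add,
    ← Matrix.add_mul, ← Matrix.mul_add, add_sub_cancel, Matrix.mul_one]

lemma fnorm_mul_le_of_isStarProjection {P : Matrix κ κ ℂ} (hP : IsStarProjection P)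
    (A : Matrix ι κ ℂ) : fnorm (A * P) ≤ fnorm A := by
  classical
  rw [← sq_le_sq₀ (fnorm_nonneg _) (fnorm_nonneg _),
    ← fnorm_mul_sq_add_fnorm_mul_one_sub_sq hP A]
  exact le_add_of_nonneg_right (sq_nonneg _)

end FrobeniusNorm

section MoorePenroseExistence

variable {ι κ : Type*} [Fintype ι] [Fintype κ]

-- `x ↦ x⁻¹` with `0⁻¹ = 0` is the pseudoinverse of scalars; apply it to the eigenvalues of `H`.
lemma exists_isMoorePenrose_of_isHermitian {H : Matrix κ κ ℂ} (hH : H.IsHermitian) :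
    ∃ B : Matrix κ κ ℂ, B.IsHermitian ∧ IsMoorePenrose H B := by
  classical
  have hmul (g h : ℝ → ℝ) : cfc g H * cfc h H = cfc (fun x ↦ g x * h x) H :=
    (cfc_mul g h H (H.finite_real_spectrum.continuousOn g)
      (H.finite_real_spectrum.continuousOn h)).symm
  have hherm (g : ℝ → ℝ) : (cfc g H).IsHermitian := cfc_predicate g H
  have hid : cfc (fun x : ℝ ↦ x) H = H := cfc_id' ℝ H hH
  suffices h : IsMoorePenrose (cfc (fun x : ℝ ↦ x) H) (cfc (fun x : ℝ ↦ x⁻¹) H) by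
    rw [hid] at h
    exact ⟨_, hherm _, h⟩
  refine ⟨?_, ?_, ?_, ?_⟩
  · simp only [hmul, mul_inv_mul_cancel]
  · have inv_mul_mul_inv (x : ℝ) : x⁻¹ * x * x⁻¹ = x⁻¹ := by
      simpa only [inv_inv] using mul_inv_mul_cancel x⁻¹
    simp only [hmul, inv_mul_mul_inv]
  · simpa only [hmul] using (hherm _).eq
  · simpa only [hmul] using (hherm _).eq

open scoped ComplexOrder in
-- `A† = (Aᴴ A)† Aᴴ` reduces the existence to Hermitian matrices.
lemma exists_isMoorePenrose (A : Matrix ι κ ℂ) : ∃ B, IsMoorePenrose A B := by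
  classical
  obtain ⟨B, hB, h_left, h_right, -, h_herm⟩ :=
    exists_isMoorePenrose_of_isHermitian (isHermitian_conjTranspose_mul_self A)
  refine ⟨B * Aᴴ, ?_, ?_, ?_, ?_⟩
  · have h_zero : A * (B * (Aᴴ * A) - 1) = 0 := by
      rw [← conjTranspose_mul_self_mul_eq_zero, Matrix.mul_sub, ← Matrix.mul_assoc, h_left,
        Matrix.mul_one, sub_self]
    simpa only [Matrix.mul_sub, Matrix.mul_one, sub_eq_zero, Matrix.mul_assoc] using h_zero
  · simpa only [Matrix.mul_assoc] using congr($h_right * Aᴴ)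
  · simp only [conjTranspose_mul, conjTranspose_conjTranspose, hB.eq, Matrix.mul_assoc]
  · rwa [Matrix.mul_assoc B]

lemma isMoorePenrose_pinv (A : Matrix ι κ ℂ) : IsMoorePenrose A (pinv A) := by
  rw [pinv, dif_pos (exists_isMoorePenrose A)]
  exact (exists_isMoorePenrose A).choose_spec

end MoorePenroseExistence

namespace IsMoorePenrose

variable {m ι κ : Type*} [Fintype m] [Fintype ι] [Fintype κ]
  {A : Matrix ι κ ℂ} {B : Matrix κ ι ℂ}

lemma transpose (h : IsMoorePenrose A B) : IsMoorePenrose Aᵀ Bᵀ := by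
  obtain ⟨hA, hB, hAB, hBA⟩ := h
  refine ⟨?_, ?_, ?_, ?_⟩
  · rw [← transpose_mul, ← transpose_mul, ← Matrix.mul_assoc, hA]
  · rw [← transpose_mul, ← transpose_mul, ← Matrix.mul_assoc, hB]
  · rw [← transpose_mul, conjTranspose_transpose_eq_transpose_conjTranspose, hBA]
  · rw [← transpose_mul, conjTranspose_transpose_eq_transpose_conjTranspose, hAB]

lemma isStarProjection_mul (h : IsMoorePenrose A B) : IsStarProjection (A * B) where
  isIdempotentElem := by rw [IsIdempotentElem, ← Matrix.mul_assoc, h.1]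
  isSelfAdjoint := h.2.2.1

lemma isLeast_fnorm_add_mul_eq_zero (h : IsMoorePenrose A B) (X₀ : Matrix m ι ℂ) :
    IsLeast (fnorm '' {X | (X₀ + X) * A = 0}) (fnorm (X₀ * A * B)) := by
  constructor
  · refine ⟨-(X₀ * A * B), ?_, fnorm_neg _⟩
    rw [Set.mem_ofPred_eq, Matrix.add_mul, Matrix.neg_mul, Matrix.mul_assoc X₀, Matrix.mul_assoc X₀,
      h.1, add_neg_cancel]
  · rintro _ ⟨X, hX, rfl⟩
    have h_eq : X * A = -(X₀ * A) := by
      rwa [Set.mem_ofPred_eq, Matrix.add_mul, add_comm, add_eq_zero_iff_eq_neg] at hX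
    calc fnorm (X₀ * A * B) = fnorm (X * (A * B)) := by
          rw [← Matrix.mul_assoc, h_eq, Matrix.neg_mul, fnorm_neg]
      _ ≤ fnorm X := fnorm_mul_le_of_isStarProjection h.isStarProjection_mul X

end IsMoorePenrose

section BlockRow

variable {m J N α : Type*} [Add α] {n k p : ℕ}

/-- The block row matrix `[E₁, …, Eₖ]`, with columns indexed by pairs (block, column in the block)
as in `krt`; an additive equivalence, since every matrix of this shape splits uniquely into
blocks. -/
def blockRow : (J → Matrix m N α) ≃+ Matrix m (J × N) α where
  toFun E := of fun a jl ↦ E jl.1 a jl.2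
  invFun M j := of fun a l ↦ M a (j, l)
  map_add' _ _ := rfl

lemma blockRow_apply (E : J → Matrix m N α) (a : m) (jl : J × N) :
    blockRow E a jl = E jl.1 a jl.2 := rfl

lemma blockRow_mul_transpose_krt (E : Fin k → Matrix m (Fin n) ℂ) (G : Matrix (Fin p) (Fin k) ℂ)
    (V : Matrix (Fin n) (Fin p) ℂ) :
    blockRow E * (krt G Vᵀ)ᵀ = ∑ j, E j * V * diagonal fun i ↦ G i j := by
  ext a i
  simp only [Matrix.sum_apply, mul_diagonal]
  simp only [mul_apply, Fintype.sum_prod_type, Finset.sum_mul, blockRow_apply, krt, of_apply,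
    transpose_apply]
  exact Finset.sum_congr rfl fun j _ ↦ Finset.sum_congr rfl fun l _ ↦ by ring

lemma col_blockRow_mul_transpose_krt (E : Fin k → Matrix m (Fin n) ℂ)
    (G : Matrix (Fin p) (Fin k) ℂ) (V : Matrix (Fin n) (Fin p) ℂ) (i : Fin p) :
    (blockRow E * (krt G Vᵀ)ᵀ).col i = ∑ j, G i j • (E j *ᵥ V.col i) := by
  ext a
  simp only [blockRow_mul_transpose_krt, col_apply, Matrix.sum_apply, mul_diagonal,
    Finset.sum_apply, Pi.smul_apply, smul_eq_mul, mul_comm]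
  rfl

lemma blockRow_mul_transpose_krt_eq_zero_iff (E : Fin k → Matrix m (Fin n) ℂ)
    (G : Matrix (Fin p) (Fin k) ℂ) (V : Matrix (Fin n) (Fin p) ℂ) :
    blockRow E * (krt G Vᵀ)ᵀ = 0 ↔ ∀ i, ∑ j, G i j • (E j *ᵥ V.col i) = 0 := by
  simp only [← col_blockRow_mul_transpose_krt, ← Matrix.ext_iff, funext_iff, col_apply,
    Matrix.zero_apply, Pi.zero_apply]
  exact forall_comm

end BlockRow

theorem backward_error_eq_general {m : Type*} [Fintype m] {n k p : ℕ}
    (F : Fin k → Matrix m (Fin n) ℂ) (G : Matrix (Fin p) (Fin k) ℂ)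
    (V : Matrix (Fin n) (Fin p) ℂ) :
    IsLeast
      {x : ℝ | ∃ δF : Fin k → Matrix m (Fin n) ℂ,
        (∀ i, ∑ j, G i j • ((F j + δF j) *ᵥ V.col i) = 0) ∧ x = fnorm (blockRow δF)}
      (fnorm ((∑ j, F j * V * diagonal fun i ↦ G i j) * (pinv (krt G Vᵀ))ᵀ)) := by
  have h_least :=
    (isMoorePenrose_pinv (krt G Vᵀ)).transpose.isLeast_fnorm_add_mul_eq_zero (blockRow F)
  rw [blockRow_mul_transpose_krt] at h_least
  convert h_least using 1
  ext x
  simp only [Set.mem_image, Set.mem_ofPred_eq, blockRow.surjective.exists, ← map_add,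
    blockRow_mul_transpose_krt_eq_zero_iff, Pi.add_apply, eq_comm (a := x)]

/-- The backward error `η` of the approximate eigenpairs `(λ̂ᵢ, v̂ᵢ)`, `i = 1,…,p`, i.e. the
minimum of `‖[δF₁, …, δFₖ]‖_F` over all perturbations making the `(λ̂ᵢ, v̂ᵢ)` exact eigenpairs,
is attained and equals `‖R ((G ⊙ᵀ Vᵀ)†)ᵀ‖_F`, where `R = ∑ⱼ Fⱼ V fⱼ(Λ)`. -/
theorem backward_error_eq (n k p : ℕ)
    (F : Fin k → Matrix (Fin n) (Fin n) ℂ)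
    (f : Fin k → ℂ → ℂ) (lam : Fin p → ℂ) (v : Fin p → Fin n → ℂ)
    (G : Matrix (Fin p) (Fin k) ℂ) (hG : ∀ i j, G i j = f j (lam i))
    (V : Matrix (Fin n) (Fin p) ℂ) (hV : ∀ l i, V l i = v i l)
    (R : Matrix (Fin n) (Fin p) ℂ)
    (hR : R = ∑ j, F j * V * Matrix.diagonal fun i => f j (lam i)) :
    IsLeast
      {x : ℝ | ∃ δF : Fin k → Matrix (Fin n) (Fin n) ℂ,
        (∀ i, ∑ j, f j (lam i) • ((F j + δF j).mulVec (v i)) = 0) ∧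
        x = fnorm (Matrix.of fun (m : Fin n) (jl : Fin k × Fin n) => δF jl.1 m jl.2)}
      (fnorm (R * (pinv (krt G Vᵀ))ᵀ)) := by
  obtain rfl : G = of fun i j ↦ f j (lam i) := ext hG
  obtain rfl : V = of fun l i ↦ v i l := ext hV
  exact hR ▸ backward_error_eq_general F _ _
end
end

section
/- The minimum-norm perturbations δF_1, …, δF_k realizing the backward error η (i.e., the minimum Frobenius-norm solution of the constraint Σ_{j=1}^k f_j(λ̂_i)(F_j + δF_j) v̂_i = 0 for i = 1,…,p) can be written as δF_j = −R M_j^T for suitable matrices M_j ∈ ℂ^{n×p}, j = 1,…,k. In particular each δF_j has rank at most p, and every linear combination of δF_1, …, δF_k has rank at most p. -/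
open Matrix Kronecker BigOperators

noncomputable section

/-- Euclidean norm of a complex vector. -/
def vnorm {ι : Type*} [Fintype ι] (v : ι → ℂ) : ℝ :=
  Real.sqrt (∑ i, ‖v i‖ ^ 2)

/-- `s` is a singular value of `A`: `s ≥ 0` and `s²` is an eigenvalue of `Aᴴ A`. -/
def IsSingularValue {ι κ : Type*} [Fintype ι] [Fintype κ] (A : Matrix ι κ ℂ) (s : ℝ) : Prop :=
  0 ≤ s ∧ ∃ w : κ → ℂ, w ≠ 0 ∧ (Aᴴ * A).mulVec w = ((s : ℂ) ^ 2) • w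

/-- The smallest nonzero singular value of `A`, i.e. `σ_p̂(A)` where `p̂ = rank A`. -/
noncomputable def sigmaMinPos {ι κ : Type*} [Fintype ι] [Fintype κ] (A : Matrix ι κ ℂ) : ℝ :=
  sInf {s : ℝ | IsSingularValue A s ∧ 0 < s}

/-- The smallest singular value of a square matrix `A`, the minimum of `‖A v‖₂` over
unit vectors `v`. -/
noncomputable def sigmaMinSq {n : ℕ} (A : Matrix (Fin n) (Fin n) ℂ) : ℝ :=
  sInf {x : ℝ | ∃ w : Fin n → ℂ, vnorm w = 1 ∧ x = vnorm (A.mulVec w)}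

/-!
By the identity `(B ⊗ I) vec R = vec (R Bᵀ)` with `B = (G ⊙ᵀ Vᵀ)†` and `r = vec R`, the block matrix
`[δF₁, …, δFₖ]` is `-R Bᵀ`. Hence all the `δFⱼ`, and their linear combinations, share the left
factor `R`, which has only `p` columns.
-/

section LeftFactor

variable {S μ ν π κ : Type*} [CommSemiring S] [StrongRankCondition S] [Fintype ν] [Fintype π]

theorem rank_mul_le_card_inner (A : Matrix μ π S) (B : Matrix π ν S) :
    (A * B).rank ≤ Fintype.card π :=
  (rank_mul_le_left A B).trans A.rank_le_card_width

theorem rank_sum_smul_mul_le_card_inner (s : Finset κ) (c : κ → S) (A : Matrix μ π S)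
    (B : κ → Matrix π ν S) : (∑ j ∈ s, c j • (A * B j)).rank ≤ Fintype.card π := by
  have factor : ∑ j ∈ s, c j • (A * B j) = A * ∑ j ∈ s, c j • B j := by
    simp only [Matrix.mul_sum, Matrix.mul_smul]
  rw [factor]
  exact rank_mul_le_card_inner A _

end LeftFactor

section Vectorization

variable {S μ ν π κ : Type*} [CommSemiring S] [Fintype π]

theorem mul_mul_diagonal_apply [Fintype ν] [DecidableEq π] (A : Matrix μ ν S) (V : Matrix ν π S)
    (d : π → S) (m : μ) (i : π) :
    (A * V * diagonal d) m i = d i * (A *ᵥ V.col i) m :=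
  (mul_diagonal d (A * V) m i).trans (mul_comm _ _)

theorem vec_sum_mul_mul_diagonal_apply [Fintype ν] [DecidableEq π] (s : Finset κ)
    (F : κ → Matrix μ ν S) (V : Matrix ν π S) (d : κ → π → S) (i : π) (m : μ) :
    vec (∑ j ∈ s, F j * V * diagonal (d j)) (i, m) = ∑ j ∈ s, d j i * (F j *ᵥ V.col i) m := by
  simp only [vec, Matrix.sum_apply, mul_mul_diagonal_apply]

theorem kronecker_one_mulVec_vec_apply [Fintype μ] [DecidableEq μ] (B : Matrix (κ × ν) π S)
    (R : Matrix μ π S) (j : κ) (l : ν) (m : μ) :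
    ((B ⊗ₖ (1 : Matrix μ μ S)) *ᵥ vec R) ((j, l), m) =
      (R * (B.submatrix (Prod.mk j) id)ᵀ) m l := by
  rw [kronecker_mulVec_vec, Matrix.one_mul]
  rfl

end Vectorization

theorem minimal_perturbations_low_rank_general {S μ ν τ π κ : Type*} [CommRing S] [Nontrivial S]
    [Fintype μ] [DecidableEq μ] [Fintype ν] [Fintype τ] [Fintype π] [DecidableEq π] [Fintype κ]
    (F : κ → Matrix μ ν S) (δF : κ → Matrix μ τ S) (G : Matrix π κ S) (V : Matrix ν π S)
    (R : Matrix μ π S) (hR : R = ∑ j, F j * V * diagonal (G.col j))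
    (r : π × μ → S) (hr : ∀ i m, r (i, m) = ∑ j, G i j * (F j *ᵥ V.col i) m)
    (B : Matrix (κ × τ) π S)
    (hδF : ∀ j l m, δF j m l = -((B ⊗ₖ (1 : Matrix μ μ S)) *ᵥ r) ((j, l), m)) :
    (∃ M : κ → Matrix τ π S, ∀ j, δF j = -(R * (M j)ᵀ)) ∧
    (∀ j, (δF j).rank ≤ Fintype.card π) ∧
    (∀ c : κ → S, (∑ j, c j • δF j).rank ≤ Fintype.card π) := by
  have r_eq_vec : r = vec R := by
    ext ⟨i, m⟩
    rw [hr, hR, vec_sum_mul_mul_diagonal_apply]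
    rfl
  have factor (j : κ) : δF j = -(R * (B.submatrix (Prod.mk j) id)ᵀ) := by
    ext m l
    rw [hδF, r_eq_vec, kronecker_one_mulVec_vec_apply, Matrix.neg_apply]
  refine ⟨⟨_, factor⟩, fun j => ?_, fun c => ?_⟩
  · rw [factor, ← Matrix.mul_neg]
    exact rank_mul_le_card_inner R _
  · simp only [factor, ← Matrix.mul_neg]
    exact rank_sum_smul_mul_le_card_inner _ c R _

/-- The minimum-norm perturbations `δFⱼ` realizing the backward error (the minimum Frobenius
norm solution, given by `[vec δF₁; …; vec δFₖ] = -((G ⊙ᵀ Vᵀ)† ⊗ Iₙ) r`) can be written as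
`δFⱼ = -R Mⱼᵀ` for suitable `n × p` matrices `Mⱼ`; in particular each `δFⱼ` has rank at most
`p`, and so does every linear combination of the `δFⱼ`. -/
theorem minimal_perturbations_low_rank (n k p : ℕ)
    (F δF : Fin k → Matrix (Fin n) (Fin n) ℂ)
    (f : Fin k → ℂ → ℂ) (lam : Fin p → ℂ) (v : Fin p → Fin n → ℂ)
    (G : Matrix (Fin p) (Fin k) ℂ) (hG : ∀ i j, G i j = f j (lam i))
    (V : Matrix (Fin n) (Fin p) ℂ) (hV : ∀ l i, V l i = v i l)
    (R : Matrix (Fin n) (Fin p) ℂ)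
    (hR : R = ∑ j, F j * V * Matrix.diagonal fun i => f j (lam i))
    (r : Fin p × Fin n → ℂ)
    (hr : ∀ i m, r (i, m) = ∑ j, f j (lam i) * ((F j).mulVec (v i)) m)
    (hδF : ∀ (j : Fin k) (l m : Fin n), δF j m l =
      -((pinv (krt G Vᵀ) ⊗ₖ (1 : Matrix (Fin n) (Fin n) ℂ)).mulVec r) ((j, l), m)) :
    (∃ M : Fin k → Matrix (Fin n) (Fin p) ℂ, ∀ j, δF j = -(R * (M j)ᵀ)) ∧
    (∀ j, (δF j).rank ≤ p) ∧
    (∀ c : Fin k → ℂ, (∑ j, c j • δF j).rank ≤ p) := by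
  obtain rfl : G = of fun i j => f j (lam i) := ext hG
  obtain rfl : v = V.col := funext₂ fun i l => (hV l i).symm
  simpa using minimal_perturbations_low_rank_general F δF _ V R hR r hr _ hδF
end
end

section
/- Let G ∈ ℂ^{p×k} with p ≤ k and let V ∈ ℂ^{n×p} have columns of unit Euclidean norm. Then σ_p(G ⊙^T V^T) ≥ σ_p(G); in particular, if G has full row rank, then ‖(G ⊙^T V^T)†‖₂ ≤ σ_p(G)^{−1}. -/
open Matrix Kronecker BigOperators

noncomputable section

/-- `σ_p(A)` for a matrix `A` with rows indexed by `ι` (`|ι| = p`): the smallest of the first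
`p` singular values, characterized variationally as the minimum of `‖w^* A‖₂` over unit
vectors `w`. -/
noncomputable def sigRowMin {ι κ : Type*} [Fintype ι] [Fintype κ] (A : Matrix ι κ ℂ) : ℝ :=
  sInf {x : ℝ | ∃ w : ι → ℂ, vnorm w = 1 ∧ x = vnorm (Matrix.vecMul (star w) A)}

/-- `σ_p(A)` for a matrix `A` with columns indexed by `κ` (`|κ| = p`): the smallest of the
first `p` singular values, characterized as the minimum of `‖A w‖₂` over unit vectors `w`. -/
noncomputable def sigColMin {ι κ : Type*} [Fintype ι] [Fintype κ] (A : Matrix ι κ ℂ) : ℝ :=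
  sInf {x : ℝ | ∃ w : κ → ℂ, vnorm w = 1 ∧ x = vnorm (A.mulVec w)}

/-- `σ_1(A)`, the largest singular value (spectral norm) of `A`: the supremum of `‖A w‖₂`
over unit vectors `w`. -/
noncomputable def sigColMax {ι κ : Type*} [Fintype ι] [Fintype κ] (A : Matrix ι κ ℂ) : ℝ :=
  sSup {x : ℝ | ∃ w : κ → ℂ, vnorm w = 1 ∧ x = vnorm (A.mulVec w)}

/-!
For a row vector `u`, the product `u (G ⊙ᵀ W)` is, up to the order of its entries, the concatenation
over the columns `w_l` of `W` of the vectors `(u ∘ w_l) G`, where `∘` is the entrywise product.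
Hence `‖u (G ⊙ᵀ W)‖² ≥ σ_p(G)² ∑ l, ‖u ∘ w_l‖²`, and the last sum is `∑ i, |u i|² ‖row i of W‖²`,
which equals `‖u‖²` when the rows of `W` are unit vectors.

For the pseudoinverse, `A† A` is an orthogonal projection, so
`σ_p(A) ‖u A†‖ ≤ ‖u A† A‖ ≤ ‖u‖` for every row vector `u`, i.e. `σ_p(A) ‖A†‖ ≤ 1`.
-/

section EuclideanNorm

variable {ι : Type*} [Fintype ι]

lemma vnorm_eq_norm_toLp (v : ι → ℂ) : vnorm v = ‖(WithLp.toLp 2 v : EuclideanSpace ℂ ι)‖ :=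
  (EuclideanSpace.norm_eq _).symm

lemma vnorm_nonneg (v : ι → ℂ) : 0 ≤ vnorm v := Real.sqrt_nonneg _

lemma vnorm_sq (v : ι → ℂ) : vnorm v ^ 2 = ∑ i, ‖v i‖ ^ 2 :=
  Real.sq_sqrt (by positivity)

lemma vnorm_zero : vnorm (0 : ι → ℂ) = 0 := by simp [vnorm]

lemma vnorm_pos {v : ι → ℂ} (hv : v ≠ 0) : 0 < vnorm v := by
  simpa [vnorm_eq_norm_toLp] using hv

lemma vnorm_star (v : ι → ℂ) : vnorm (star v) = vnorm v := by simp [vnorm]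

lemma vnorm_smul (c : ℂ) (v : ι → ℂ) : vnorm (c • v) = ‖c‖ * vnorm v := by
  simp only [vnorm_eq_norm_toLp, WithLp.toLp_smul, norm_smul]

lemma vnorm_single_one [DecidableEq ι] (i : ι) : vnorm (Pi.single i 1) = 1 := by
  simp [vnorm_eq_norm_toLp]

lemma vnorm_of_isEmpty [IsEmpty ι] (v : ι → ℂ) : vnorm v = 0 := by simp [vnorm]

end EuclideanNorm

section OperatorNorm

open scoped Matrix.Norms.L2Operator

variable {ι κ : Type*} [Fintype ι] [Fintype κ] [DecidableEq κ]

lemma vnorm_mulVec_le (A : Matrix ι κ ℂ) (v : κ → ℂ) : vnorm (A *ᵥ v) ≤ ‖A‖ * vnorm v := by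
  rw [vnorm_eq_norm_toLp, vnorm_eq_norm_toLp]
  exact A.l2_opNorm_mulVec (WithLp.toLp 2 v)

lemma vnorm_vecMul_le (A : Matrix ι κ ℂ) (u : ι → ℂ) : vnorm (u ᵥ* A) ≤ ‖A‖ * vnorm u := by
  classical
  rw [← vnorm_star (u ᵥ* A), star_vecMul, ← vnorm_star u, ← l2_opNorm_conjTranspose]
  exact vnorm_mulVec_le _ _

lemma l2_opNorm_le_of_vnorm_vecMul_le {A : Matrix ι κ ℂ} {c : ℝ} (hc : 0 ≤ c)
    (h : ∀ u, vnorm (u ᵥ* A) ≤ c * vnorm u) : ‖A‖ ≤ c := by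
  classical
  rw [← l2_opNorm_conjTranspose, l2_opNorm_def]
  refine ContinuousLinearMap.opNorm_le_bound _ hc fun v => ?_
  have bound := h (star v.ofLp)
  rwa [← vnorm_star, star_vecMul, star_star, vnorm_star, vnorm_eq_norm_toLp,
    vnorm_eq_norm_toLp] at bound

end OperatorNorm

section SingularValues

variable {ι κ : Type*} [Fintype ι] [Fintype κ]

lemma sigRowMin_nonneg (A : Matrix ι κ ℂ) : 0 ≤ sigRowMin A := by
  apply Real.sInf_nonneg
  rintro _ ⟨w, -, rfl⟩
  exact vnorm_nonneg _

lemma sigRowMin_of_isEmpty [IsEmpty ι] (A : Matrix ι κ ℂ) : sigRowMin A = 0 := by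
  simp [sigRowMin, vnorm_of_isEmpty]

lemma sigColMax_of_isEmpty [IsEmpty κ] (A : Matrix ι κ ℂ) : sigColMax A = 0 := by
  simp [sigColMax, vnorm_of_isEmpty]

lemma sigRowMin_le_vnorm_vecMul (A : Matrix ι κ ℂ) {u : ι → ℂ} (hu : vnorm u = 1) :
    sigRowMin A ≤ vnorm (u ᵥ* A) := by
  refine csInf_le ⟨0, ?_⟩ ⟨star u, by rwa [vnorm_star], by rw [star_star]⟩
  rintro _ ⟨w, -, rfl⟩
  exact vnorm_nonneg _

lemma sigRowMin_mul_vnorm_le (A : Matrix ι κ ℂ) (u : ι → ℂ) :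
    sigRowMin A * vnorm u ≤ vnorm (u ᵥ* A) := by
  rcases eq_or_ne u 0 with rfl | hu
  · simp [vnorm_zero]
  have hpos : 0 < vnorm u := vnorm_pos hu
  have norm_inv : ‖(((vnorm u)⁻¹ : ℝ) : ℂ)‖ = (vnorm u)⁻¹ := by
    rw [Complex.norm_real, Real.norm_of_nonneg (by positivity)]
  have normalized := sigRowMin_le_vnorm_vecMul A (u := (((vnorm u)⁻¹ : ℝ) : ℂ) • u)
    (by rw [vnorm_smul, norm_inv, inv_mul_cancel₀ hpos.ne'])
  rwa [smul_vecMul, vnorm_smul, norm_inv, le_inv_mul_iff₀' hpos] at normalized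

lemma le_sigRowMin [Nonempty ι] {A : Matrix ι κ ℂ} {c : ℝ}
    (h : ∀ u, c * vnorm u ≤ vnorm (u ᵥ* A)) : c ≤ sigRowMin A := by
  classical
  obtain ⟨i⟩ := ‹Nonempty ι›
  refine le_csInf ⟨_, Pi.single i 1, vnorm_single_one i, rfl⟩ ?_
  rintro _ ⟨w, hw, rfl⟩
  simpa [vnorm_star, hw] using h (star w)

lemma vecMul_injective_of_sigRowMin_pos {A : Matrix ι κ ℂ} (hA : 0 < sigRowMin A) :
    Function.Injective A.vecMul := by
  refine (injective_iff_map_eq_zero A.vecMulLinear).2 fun u hu => ?_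
  by_contra hne
  have bound := sigRowMin_mul_vnorm_le A u
  rw [← vecMulLinear_apply, hu, vnorm_zero] at bound
  exact bound.not_gt (mul_pos hA (vnorm_pos hne))

open scoped Matrix.Norms.L2Operator in
lemma inv_l2_opNorm_le_sigRowMin [DecidableEq ι] [Nonempty ι] {A : Matrix ι κ ℂ}
    {B : Matrix κ ι ℂ} (hAB : A * B = 1) : ‖B‖⁻¹ ≤ sigRowMin A := by
  have hB : 0 < ‖B‖ := norm_pos_iff.2 fun h => by simp [h] at hAB
  refine le_sigRowMin fun u => ?_
  rw [inv_mul_le_iff₀ hB]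
  calc vnorm u = vnorm ((u ᵥ* A) ᵥ* B) := by rw [vecMul_vecMul, hAB, vecMul_one]
    _ ≤ ‖B‖ * vnorm (u ᵥ* A) := vnorm_vecMul_le B _

open scoped Matrix.Norms.L2Operator in
lemma sigRowMin_pos_of_rank_eq_card [Nonempty ι] {A : Matrix ι κ ℂ}
    (hA : A.rank = Fintype.card ι) : 0 < sigRowMin A := by
  classical
  have range_eq_top : LinearMap.range A.mulVecLin = ⊤ :=
    Submodule.eq_top_of_finrank_eq (by rw [← Matrix.rank, hA, Module.finrank_fintype_fun_eq_card])
  obtain ⟨B, hAB⟩ :=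
    mulVec_surjective_iff_exists_right_inverse.1 (LinearMap.range_eq_top.1 range_eq_top)
  have hB : B ≠ 0 := fun h => by simp [h] at hAB
  exact (inv_pos.2 (norm_pos_iff.2 hB)).trans_le (inv_l2_opNorm_le_sigRowMin hAB)

open scoped Matrix.Norms.L2Operator in
lemma sigColMax_le_l2_opNorm [DecidableEq κ] (A : Matrix ι κ ℂ) : sigColMax A ≤ ‖A‖ := by
  refine Real.sSup_le ?_ (norm_nonneg A)
  rintro _ ⟨w, hw, rfl⟩
  simpa [hw] using vnorm_mulVec_le A w

end SingularValues

section Pseudoinverse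

variable {ι κ : Type*} [Fintype ι] [Fintype κ] {A : Matrix ι κ ℂ} {B : Matrix κ ι ℂ}

lemma isMoorePenrose_pinv_s8 (h : ∃ B, IsMoorePenrose A B) : IsMoorePenrose A (pinv A) := by
  rw [pinv, dif_pos h]
  exact h.choose_spec

lemma isMoorePenrose_conjTranspose_mul_inv [DecidableEq ι] (hA : IsUnit (A * Aᴴ)) :
    IsMoorePenrose A (Aᴴ * (A * Aᴴ)⁻¹) := by
  have right_inv : A * (Aᴴ * (A * Aᴴ)⁻¹) = 1 := by
    rw [← Matrix.mul_assoc, mul_nonsing_inv _ ((isUnit_iff_isUnit_det _).1 hA)]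
  refine ⟨by rw [right_inv, Matrix.one_mul], by rw [Matrix.mul_assoc, right_inv, Matrix.mul_one],
    by rw [right_inv, conjTranspose_one], ?_⟩
  simp only [conjTranspose_mul, conjTranspose_nonsing_inv, conjTranspose_conjTranspose,
    Matrix.mul_assoc]

lemma IsMoorePenrose.isStarProjection_mul_s8 (h : IsMoorePenrose A B) :
    IsStarProjection (B * A) := by
  obtain ⟨-, hBAB, -, hBA⟩ := h
  exact ⟨by rw [IsIdempotentElem, ← Matrix.mul_assoc, hBAB], hBA⟩

open scoped Matrix.Norms.L2Operator in
lemma IsMoorePenrose.sigRowMin_mul_vnorm_vecMul_le (h : IsMoorePenrose A B) (u : κ → ℂ) :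
    sigRowMin A * vnorm (u ᵥ* B) ≤ vnorm u := by
  classical
  calc sigRowMin A * vnorm (u ᵥ* B)
      ≤ vnorm (u ᵥ* (B * A)) := by
        rw [← vecMul_vecMul]
        exact sigRowMin_mul_vnorm_le A _
    _ ≤ ‖B * A‖ * vnorm u := vnorm_vecMul_le _ _
    _ ≤ vnorm u := mul_le_of_le_one_left (vnorm_nonneg u) h.isStarProjection_mul_s8.norm_le

lemma IsMoorePenrose.sigColMax_le_inv_sigRowMin (h : IsMoorePenrose A B) (hA : 0 < sigRowMin A) :
    sigColMax B ≤ (sigRowMin A)⁻¹ := by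
  classical
  refine (sigColMax_le_l2_opNorm B).trans (l2_opNorm_le_of_vnorm_vecMul_le (by positivity) ?_)
  exact fun u => (le_inv_mul_iff₀ hA).2 (h.sigRowMin_mul_vnorm_vecMul_le u)

open scoped ComplexOrder in
lemma sigColMax_pinv_le_inv_sigRowMin (hA : 0 < sigRowMin A) :
    sigColMax (pinv A) ≤ (sigRowMin A)⁻¹ := by
  classical
  have gram_posDef : (A * Aᴴ).PosDef :=
    .mul_conjTranspose_self A (vecMul_injective_of_sigRowMin_pos hA)
  have pinv_spec : IsMoorePenrose A (pinv A) :=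
    isMoorePenrose_pinv_s8 ⟨_, isMoorePenrose_conjTranspose_mul_inv gram_posDef.isUnit⟩
  exact pinv_spec.sigColMax_le_inv_sigRowMin hA

end Pseudoinverse

section EntrywiseProduct

variable {ι κ : Type*} [Fintype ι] [Fintype κ]

lemma sum_vnorm_mul_col_sq (W : Matrix ι κ ℂ) (u : ι → ℂ) :
    ∑ l, vnorm (u * W.col l) ^ 2 = ∑ i, ‖u i‖ ^ 2 * vnorm (W i) ^ 2 := by
  simp only [vnorm_sq, Pi.mul_apply, col_apply, norm_mul, mul_pow, Finset.mul_sum]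
  exact Finset.sum_comm

lemma mul_vnorm_sq_le_sum_vnorm_mul_col_sq {W : Matrix ι κ ℂ} {c : ℝ}
    (hc : 0 ≤ c) (hW : ∀ i, c ≤ vnorm (W i)) (u : ι → ℂ) :
    (c * vnorm u) ^ 2 ≤ ∑ l, vnorm (u * W.col l) ^ 2 := by
  rw [sum_vnorm_mul_col_sq, mul_pow, vnorm_sq, mul_comm, Finset.sum_mul]
  gcongr with i
  exact hW i

end EntrywiseProduct

section KhatriRao

variable {n k p : ℕ} (G : Matrix (Fin p) (Fin k) ℂ) (W : Matrix (Fin p) (Fin n) ℂ)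

lemma vecMul_krt_apply (u : Fin p → ℂ) (j : Fin k) (l : Fin n) :
    (u ᵥ* krt G W) (j, l) = ((u * W.col l) ᵥ* G) j := by
  simp only [vecMul, dotProduct, krt, of_apply, Pi.mul_apply, col_apply]
  exact Finset.sum_congr rfl fun i _ => by ring

lemma vnorm_vecMul_krt_sq (u : Fin p → ℂ) :
    vnorm (u ᵥ* krt G W) ^ 2 = ∑ l, vnorm ((u * W.col l) ᵥ* G) ^ 2 := by
  simp only [vnorm_sq, Fintype.sum_prod_type_right, vecMul_krt_apply]

variable {W} {c : ℝ}

lemma mul_sigRowMin_mul_vnorm_le_vnorm_vecMul_krt (hc : 0 ≤ c) (hW : ∀ i, c ≤ vnorm (W i))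
    (u : Fin p → ℂ) : c * sigRowMin G * vnorm u ≤ vnorm (u ᵥ* krt G W) := by
  refine le_of_sq_le_sq ?_ (vnorm_nonneg _)
  calc (c * sigRowMin G * vnorm u) ^ 2
      = sigRowMin G ^ 2 * (c * vnorm u) ^ 2 := by ring
    _ ≤ sigRowMin G ^ 2 * ∑ l, vnorm (u * W.col l) ^ 2 := by
        gcongr
        exact mul_vnorm_sq_le_sum_vnorm_mul_col_sq hc hW u
    _ = ∑ l, (sigRowMin G * vnorm (u * W.col l)) ^ 2 := by simp only [Finset.mul_sum, mul_pow]
    _ ≤ ∑ l, vnorm ((u * W.col l) ᵥ* G) ^ 2 := by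
        gcongr with l
        · exact mul_nonneg (sigRowMin_nonneg G) (vnorm_nonneg _)
        · exact sigRowMin_mul_vnorm_le G _
    _ = vnorm (u ᵥ* krt G W) ^ 2 := (vnorm_vecMul_krt_sq G W u).symm

lemma mul_sigRowMin_le_sigRowMin_krt (hc : 0 ≤ c) (hW : ∀ i, c ≤ vnorm (W i)) :
    c * sigRowMin G ≤ sigRowMin (krt G W) := by
  rcases isEmpty_or_nonempty (Fin p) with _ | _
  · simp [sigRowMin_of_isEmpty]
  · exact le_sigRowMin (mul_sigRowMin_mul_vnorm_le_vnorm_vecMul_krt G hc hW)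

end KhatriRao

theorem khatri_rao_sigma_min_bound_few_pairs_general {n k p : ℕ} {c : ℝ} (hc : 0 < c)
    (G : Matrix (Fin p) (Fin k) ℂ) (V : Matrix (Fin n) (Fin p) ℂ)
    (hV : ∀ i, c ≤ vnorm (fun l => V l i)) :
    c * sigRowMin G ≤ sigRowMin (krt G Vᵀ) ∧
    (G.rank = p → sigColMax (pinv (krt G Vᵀ)) ≤ (c * sigRowMin G)⁻¹) := by
  have sig_le := mul_sigRowMin_le_sigRowMin_krt G (W := Vᵀ) hc.le hV
  refine ⟨sig_le, fun hG => ?_⟩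
  rcases isEmpty_or_nonempty (Fin p) with _ | _
  · simp [sigRowMin_of_isEmpty, sigColMax_of_isEmpty]
  have sig_pos : 0 < c * sigRowMin G :=
    mul_pos hc (sigRowMin_pos_of_rank_eq_card (by rw [hG, Fintype.card_fin]))
  calc sigColMax (pinv (krt G Vᵀ))
      ≤ (sigRowMin (krt G Vᵀ))⁻¹ := sigColMax_pinv_le_inv_sigRowMin (sig_pos.trans_le sig_le)
    _ ≤ (c * sigRowMin G)⁻¹ := inv_anti₀ sig_pos sig_le

/-- If `p ≤ k` and every column of `V` has unit Euclidean norm, then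
`σ_p(G ⊙ᵀ Vᵀ) ≥ σ_p(G)`; in particular, if `G` has full row rank, then
`‖(G ⊙ᵀ Vᵀ)†‖₂ ≤ σ_p(G)⁻¹`. -/
theorem khatri_rao_sigma_min_bound_few_pairs (n k p : ℕ) (hpk : p ≤ k)
    (G : Matrix (Fin p) (Fin k) ℂ) (V : Matrix (Fin n) (Fin p) ℂ)
    (hV : ∀ i, vnorm (fun l => V l i) = 1) :
    sigRowMin G ≤ sigRowMin (krt G Vᵀ) ∧
    (G.rank = p → sigColMax (pinv (krt G Vᵀ)) ≤ (sigRowMin G)⁻¹) := by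
  simpa using khatri_rao_sigma_min_bound_few_pairs_general one_pos G V fun i => (hV i).ge
end
end
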